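/- For every ℓ ≥ 2, the number of 321-avoiding alternating (up-down) permutations of length 2ℓ that begin with their smallest entry (i.e., w_1 = 1) is the Catalan number C_ℓ. -/

import Mathlib

/-- `w` is an alternating (up-down) permutation: `w 0 < w 1 > w 2 < ⋯`. -/
def UpDown {n : ℕ} (w : Equiv.Perm (Fin n)) : Prop :=
  ∀ i : ℕ, ∀ h : i + 1 < n,
    if i % 2 = 0 then w ⟨i, Nat.lt_of_succ_lt h⟩ < w ⟨i + 1, h⟩
    else w ⟨i + 1, h⟩ < w ⟨i, Nat.lt_of_succ_lt h⟩

/-- `w` is a reverse-alternating (down-up) permutation: `w 0 > w 1 < w 2 > ⋯`. -/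
def DownUp {n : ℕ} (w : Equiv.Perm (Fin n)) : Prop :=
  ∀ i : ℕ, ∀ h : i + 1 < n,
    if i % 2 = 0 then w ⟨i + 1, h⟩ < w ⟨i, Nat.lt_of_succ_lt h⟩
    else w ⟨i, Nat.lt_of_succ_lt h⟩ < w ⟨i + 1, h⟩

/-- The set of occurrences of the pattern 321 in `w`. -/
def occ321 {n : ℕ} (w : Equiv.Perm (Fin n)) : Set (Fin n × Fin n × Fin n) :=
  {t | t.1 < t.2.1 ∧ t.2.1 < t.2.2 ∧ w t.2.2 < w t.2.1 ∧ w t.2.1 < w t.1}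

/-- The set of occurrences of the pattern 123 in `w`. -/
def occ123 {n : ℕ} (w : Equiv.Perm (Fin n)) : Set (Fin n × Fin n × Fin n) :=
  {t | t.1 < t.2.1 ∧ t.2.1 < t.2.2 ∧ w t.1 < w t.2.1 ∧ w t.2.1 < w t.2.2}

/-- Two-row standard Young tableaux of shape `(l, l)`, entries `0, …, 2l-1`. -/
def SYT2 (l : ℕ) : Type :=
  {t : (Fin l → ℕ) × (Fin l → ℕ) // StrictMono t.1 ∧ StrictMono t.2 ∧ (∀ i, t.1 i < t.2 i) ∧
    (∀ i j, t.1 i ≠ t.2 j) ∧ (∀ i, t.2 i < 2 * l)}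

theorem count_take_eq (x : DyckStep) (L : List DyckStep) (k : ℕ) :
    (L.take k).count x = ((Finset.range k).filter (fun j => L[j]? = some x)).card := by
  induction k with
  | zero => simp
  | succ k ih =>
    rw [List.take_add_one, List.count_append, ih, Finset.range_add_one, Finset.filter_insert]
    by_cases h : L[k]? = some x
    · rw [if_pos h, Finset.card_insert_of_notMem (by simp)]
      simp [h]
    · rw [if_neg h]
      rcases h' : L[k]? with _ | y
      · simp
      · have : y ≠ x := by rintro rfl; exact h h'
        simp [this]

theorem syt_cover {l : ℕ} (a b : Fin l → ℕ) (ha : StrictMono a) (hb : StrictMono b)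
    (hab : ∀ i, a i < b i) (hne : ∀ i j, a i ≠ b j) (hlt : ∀ i, b i < 2 * l) :
    ∀ x, x < 2 * l → (∃ i, a i = x) ∨ ∃ i, b i = x := by
  have hd : Disjoint (Finset.univ.image a) (Finset.univ.image b) := by
    rw [Finset.disjoint_left]
    intro x hx hy
    simp only [Finset.mem_image, Finset.mem_univ, true_and] at hx hy
    obtain ⟨i, rfl⟩ := hx
    obtain ⟨j, hj⟩ := hy
    exact hne i j hj.symm
  have hc : (Finset.univ.image a ∪ Finset.univ.image b) = Finset.range (2 * l) := by
    apply Finset.eq_of_subset_of_card_le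
    · intro x hx
      simp only [Finset.mem_union, Finset.mem_image, Finset.mem_univ, true_and] at hx
      rw [Finset.mem_range]
      rcases hx with ⟨i, rfl⟩ | ⟨i, rfl⟩
      · exact (hab i).trans (hlt i)
      · exact hlt i
    · rw [Finset.card_union_of_disjoint hd, Finset.card_image_of_injective _ ha.injective,
        Finset.card_image_of_injective _ hb.injective]
      simp
      omega
  intro x hx
  have : x ∈ Finset.univ.image a ∪ Finset.univ.image b := by rw [hc]; simpa using hx
  simpa using this

open Classical in
noncomputable def sytList {l : ℕ} (a : Fin l → ℕ) : List DyckStep :=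
  (List.range (2 * l)).map (fun j => if ∃ i, a i = j then DyckStep.U else DyckStep.D)

theorem sytList_get {l : ℕ} (a b : Fin l → ℕ) (ha : StrictMono a) (hb : StrictMono b)
    (hab : ∀ i, a i < b i) (hne : ∀ i j, a i ≠ b j) (hlt : ∀ i, b i < 2 * l) (j : ℕ) :
    ((sytList a)[j]? = some DyckStep.U ↔ ∃ i, a i = j) ∧
    ((sytList a)[j]? = some DyckStep.D ↔ ∃ i, b i = j) := by
  by_cases hj : j < 2 * l
  · have e : (sytList a)[j]? = some (if ∃ i, a i = j then DyckStep.U else DyckStep.D) := by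
      simp [sytList, hj]
    rw [e]
    have := syt_cover a b ha hb hab hne hlt j hj
    by_cases h : ∃ i, a i = j
    · rw [if_pos h]
      refine ⟨by simp [h], ?_⟩
      simp only [Option.some.injEq, reduceCtorEq, false_iff]
      rintro ⟨k, hk⟩
      obtain ⟨i, hi⟩ := h
      exact hne i k (hi.trans hk.symm)
    · rw [if_neg h]
      refine ⟨by simpa using h, ?_⟩
      have := this.resolve_left h
      simp [this]
  · have e : (sytList a)[j]? = none := by simp [sytList]; omega
    rw [e]
    constructor
    · simp only [reduceCtorEq, false_iff]
      rintro ⟨i, rfl⟩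
      exact hj ((hab i).trans (hlt i))
    · simp only [reduceCtorEq, false_iff]
      rintro ⟨i, rfl⟩
      exact hj (hlt i)

theorem card_range_filter {l : ℕ} (a : Fin l → ℕ) (ha : StrictMono a) (k : ℕ) (P : ℕ → Prop)
    [DecidablePred P] (hP : ∀ j, P j ↔ ∃ i, a i = j) :
    ((Finset.range k).filter P).card = (Finset.univ.filter (fun i => a i < k)).card := by
  rw [← Finset.card_image_of_injective _ ha.injective]
  congr 1
  ext x
  simp only [Finset.mem_filter, Finset.mem_range, hP, Finset.mem_image, Finset.mem_univ, true_and]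
  constructor
  · rintro ⟨h, i, rfl⟩; exact ⟨i, h, rfl⟩
  · rintro ⟨i, h, rfl⟩; exact ⟨h, i, rfl⟩

theorem sytList_count {l : ℕ} (a b : Fin l → ℕ) (ha : StrictMono a) (hb : StrictMono b)
    (hab : ∀ i, a i < b i) (hne : ∀ i j, a i ≠ b j) (hlt : ∀ i, b i < 2 * l) (k : ℕ) :
    ((sytList a).take k).count DyckStep.U = (Finset.univ.filter (fun i => a i < k)).card ∧
    ((sytList a).take k).count DyckStep.D = (Finset.univ.filter (fun i => b i < k)).card := by
  rw [count_take_eq, count_take_eq]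
  have := sytList_get a b ha hb hab hne hlt
  exact ⟨card_range_filter a ha k _ fun j => (this j).1,
    card_range_filter b hb k _ fun j => (this j).2⟩

theorem sytList_count_all {l : ℕ} (a b : Fin l → ℕ) (ha : StrictMono a) (hb : StrictMono b)
    (hab : ∀ i, a i < b i) (hne : ∀ i j, a i ≠ b j) (hlt : ∀ i, b i < 2 * l) :
    (sytList a).count DyckStep.U = l ∧ (sytList a).count DyckStep.D = l := by
  have h := sytList_count a b ha hb hab hne hlt (2 * l)
  have e : (sytList a).take (2 * l) = sytList a := by
    apply List.take_of_length_le; simp [sytList]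
  rw [e] at h
  rw [h.1, h.2]
  have h1 : ∀ i, a i < 2 * l := fun i => (hab i).trans (hlt i)
  simp [h1, hlt]

noncomputable def sytToDyck (l : ℕ) (t : SYT2 l) : {p : DyckWord // p.semilength = l} :=
  have h := sytList_count_all t.1.1 t.1.2 t.2.1 t.2.2.1 t.2.2.2.1 t.2.2.2.2.1 t.2.2.2.2.2
  ⟨⟨sytList t.1.1, h.1.trans h.2.symm, fun k => by
    have h := sytList_count t.1.1 t.1.2 t.2.1 t.2.2.1 t.2.2.2.1 t.2.2.2.2.1 t.2.2.2.2.2 k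
    rw [h.1, h.2]
    apply Finset.card_le_card
    intro i
    simp only [Finset.mem_filter, Finset.mem_univ, true_and]
    exact (t.2.2.2.1 i).trans⟩, h.1⟩

theorem sytToDyck_bij (l : ℕ) : Function.Bijective (sytToDyck l) := by
  constructor
  · rintro ⟨⟨a, b⟩, ha, hb, hab, hne, hlt⟩ ⟨⟨a', b'⟩, ha', hb', hab', hne', hlt'⟩ h
    have h1 : sytList a = sytList a' := congrArg (fun p => p.1.toList) h
    have g := sytList_get a b ha hb hab hne hlt
    have g' := sytList_get a' b' ha' hb' hab' hne' hlt'
    have e1 : a = a' := by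
      apply (StrictMono.range_inj ha ha').1
      ext j
      rw [Set.mem_range, Set.mem_range, ← (g j).1, ← (g' j).1, h1]
    have e2 : b = b' := by
      apply (StrictMono.range_inj hb hb').1
      ext j
      rw [Set.mem_range, Set.mem_range, ← (g j).2, ← (g' j).2, h1]
    subst e1 e2
    rfl
  · rintro ⟨p, hp⟩
    have hU : p.toList.count DyckStep.U = l := hp
    have hD : p.toList.count DyckStep.D = l := p.count_U_eq_count_D.symm.trans hp
    have hlen : p.toList.length = 2 * l := by
      have := p.two_mul_semilength_eq_length
      omega
    have e : p.toList.take (2 * l) = p.toList := by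
      apply List.take_of_length_le; omega
    have cU := count_take_eq DyckStep.U p.toList
    have cD := count_take_eq DyckStep.D p.toList
    have pre := p.count_D_le_count_U
    have cU0 := cU (2 * l)
    have cD0 := cD (2 * l)
    rw [e, hU] at cU0
    rw [e, hD] at cD0
    set A := (Finset.range (2 * l)).filter (fun j => p.toList[j]? = some DyckStep.U) with hA
    set B := (Finset.range (2 * l)).filter (fun j => p.toList[j]? = some DyckStep.D) with hB
    let a := A.orderEmbOfFin cU0.symm
    let b := B.orderEmbOfFin cD0.symm
    have ra : ∀ j, (∃ i, a i = j) ↔ j ∈ A := by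
      intro j
      have := A.range_orderEmbOfFin cU0.symm
      rw [← Finset.mem_coe, ← this]; rfl
    have rb : ∀ j, (∃ i, b i = j) ↔ j ∈ B := by
      intro j
      have := B.range_orderEmbOfFin cD0.symm
      rw [← Finset.mem_coe, ← this]; rfl
    have hne : ∀ i j, a i ≠ b j := by
      intro i j h
      have h1 := (ra _).1 ⟨i, rfl⟩
      have h2 := (rb _).1 ⟨j, rfl⟩
      rw [h] at h1
      simp only [hA, hB, Finset.mem_filter] at h1 h2
      have := h1.2.symm.trans h2.2
      simp at this
    have hlt : ∀ i, b i < 2 * l := by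
      intro i
      have h2 := (rb _).1 ⟨i, rfl⟩
      simp only [hB, Finset.mem_filter, Finset.mem_range] at h2
      exact h2.1
    have hab : ∀ i, a i < b i := by
      intro i
      by_contra hcon
      have hcon : b i < a i := lt_of_le_of_ne (not_lt.1 hcon) (Ne.symm (hne i i))
      have h1 := pre (b i + 1)
      rw [cU, cD] at h1
      have h2 : ((Finset.Iic i).image b).card ≤ ((Finset.range (b i + 1)).filter
          (fun j => p.toList[j]? = some DyckStep.D)).card := by
        apply Finset.card_le_card
        intro x hx
        simp only [Finset.mem_image, Finset.mem_Iic] at hx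
        obtain ⟨k, hk, rfl⟩ := hx
        have h3 := (rb _).1 ⟨k, rfl⟩
        have h4 : b k ≤ b i := b.monotone hk
        simp only [hB, Finset.mem_filter, Finset.mem_range] at h3 ⊢
        exact ⟨by omega, h3.2⟩
      have h3 : ((Finset.range (b i + 1)).filter
          (fun j => p.toList[j]? = some DyckStep.U)).card ≤ ((Finset.Iio i).image a).card := by
        apply Finset.card_le_card
        intro x hx
        simp only [Finset.mem_filter, Finset.mem_range] at hx
        have hx' : x ∈ A := by
          simp only [hA, Finset.mem_filter, Finset.mem_range]
          have := hlt i
          exact ⟨by omega, hx.2⟩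
        obtain ⟨k, rfl⟩ := (ra x).2 hx'
        simp only [Finset.mem_image, Finset.mem_Iio]
        refine ⟨k, ?_, rfl⟩
        apply a.strictMono.lt_iff_lt.1
        omega
      rw [Finset.card_image_of_injective _ b.injective, Fin.card_Iic] at h2
      rw [Finset.card_image_of_injective _ a.injective, Fin.card_Iio] at h3
      omega
    refine ⟨⟨⟨a, b⟩, a.strictMono, b.strictMono, hab, hne, hlt⟩, ?_⟩
    apply Subtype.ext
    apply DyckWord.ext
    change sytList a = p.toList
    have g := sytList_get a b a.strictMono b.strictMono hab hne hlt
    apply List.ext_getElem?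
    intro j
    have gU : (sytList a)[j]? = some DyckStep.U ↔ p.toList[j]? = some DyckStep.U := by
      rw [(g j).1, ra, hA, Finset.mem_filter, Finset.mem_range]
      refine ⟨fun h => h.2, fun h => ⟨?_, h⟩⟩
      have := (List.getElem?_eq_some_iff.1 h).1
      omega
    have gD : (sytList a)[j]? = some DyckStep.D ↔ p.toList[j]? = some DyckStep.D := by
      rw [(g j).2, rb, hB, Finset.mem_filter, Finset.mem_range]
      refine ⟨fun h => h.2, fun h => ⟨?_, h⟩⟩
      have := (List.getElem?_eq_some_iff.1 h).1
      omega
    rcases h1 : (sytList a)[j]? with _ | x <;> rcases h2 : p.toList[j]? with _ | y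
    · rfl
    · rw [h1, h2] at gU gD; cases y <;> simp at gU gD
    · rw [h1, h2] at gU gD; cases x <;> simp at gU gD
    · rw [h1, h2] at gU gD; cases x <;> cases y <;> simp at gU gD <;> rfl

theorem card_SYT2 (l : ℕ) : Nat.card (SYT2 l) = catalan l := by
  rw [Nat.card_congr (Equiv.ofBijective _ (sytToDyck_bij l)), Nat.card_eq_fintype_card,
    DyckWord.card_dyckWord_semilength_eq_catalan]

/-- `w` as a function on natural numbers. -/
def natFun {n : ℕ} (w : Equiv.Perm (Fin n)) (i : ℕ) : ℕ :=
  if h : i < n then (w ⟨i, h⟩ : ℕ) else 0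

def rowA (l : ℕ) (W : ℕ → ℕ) (i : Fin l) : ℕ :=
  if (i : ℕ) + 1 < l then W (2 * i + 2) - 1 else W (2 * l - 1) - 1

def rowB (l : ℕ) (W : ℕ → ℕ) (i : Fin l) : ℕ :=
  if (i : ℕ) + 1 < l then W (2 * i + 1) - 1 else 2 * l - 1

structure GoodFun (l : ℕ) (W : ℕ → ℕ) : Prop where
  lt : ∀ i, i < 2 * l → W i < 2 * l
  inj : ∀ i j, i < 2 * l → j < 2 * l → W i = W j → i = j
  up : ∀ i, 2 * i + 1 < 2 * l → W (2 * i) < W (2 * i + 1)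
  down : ∀ i, 2 * i + 2 < 2 * l → W (2 * i + 2) < W (2 * i + 1)
  av : ∀ i j k, i < j → j < k → k < 2 * l → W k < W j → W j < W i → False
  zero : W 0 = 0

theorem good_iff (l : ℕ) (h0 : 0 < 2 * l) (w : Equiv.Perm (Fin (2 * l))) :
    (UpDown w ∧ occ321 w = ∅ ∧ w ⟨0, h0⟩ = ⟨0, h0⟩) ↔ GoodFun l (natFun w) := by
  have e : ∀ i (h : i < 2 * l), natFun w i = (w ⟨i, h⟩ : ℕ) := fun i h => by simp [natFun, h]
  constructor
  · rintro ⟨h1, h2, h3⟩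
    refine ⟨?_, ?_, ?_, ?_, ?_, ?_⟩
    · intro i hi; rw [e i hi]; exact (w _).2
    · intro i j hi hj h
      rw [e i hi, e j hj] at h
      simpa using w.injective (Fin.ext h)
    · intro i hi
      have := h1 (2 * i) hi
      rw [if_pos (by omega)] at this
      rw [e _ hi, e _ (by omega)]
      exact this
    · intro i hi
      have := h1 (2 * i + 1) hi
      rw [if_neg (by omega)] at this
      rw [e _ hi, e _ (by omega)]
      exact this
    · intro i j k hij hjk hk h4 h5
      rw [e i (by omega), e j (by omega)] at h5
      rw [e k (by omega), e j (by omega)] at h4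
      have : ((⟨i, by omega⟩, ⟨j, by omega⟩, ⟨k, hk⟩) :
        Fin (2 * l) × Fin (2 * l) × Fin (2 * l)) ∈ occ321 w := ⟨hij, hjk, h4, h5⟩
      rw [h2] at this
      exact this
    · rw [e 0 h0, h3]
  · intro g
    refine ⟨?_, ?_, ?_⟩
    · intro i hi
      split_ifs with h
      · have := g.up (i / 2)
        rw [show 2 * (i / 2) = i by omega, e _ hi, e _ (by omega)] at this
        exact this hi
      · have := g.down (i / 2)
        rw [show 2 * (i / 2) + 2 = i + 1 by omega, show 2 * (i / 2) + 1 = i by omega,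
          e _ hi, e _ (by omega)] at this
        exact this hi
    · apply Set.eq_empty_of_forall_notMem
      rintro ⟨i, j, k⟩ ⟨h1, h2, h3, h4⟩
      refine g.av i j k h1 h2 k.2 ?_ ?_
      · rw [e _ k.2, e _ j.2]; exact h3
      · rw [e _ i.2, e _ j.2]; exact h4
    · apply Fin.ext
      have := g.zero
      rwa [e 0 h0] at this

theorem GoodFun.pos {l : ℕ} {W : ℕ → ℕ} (g : GoodFun l W) (i : ℕ) (h0 : 0 < i)
    (hi : i < 2 * l) : 0 < W i := by
  rcases Nat.eq_zero_or_pos (W i) with h | h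
  · have := g.inj i 0 hi (by omega) (h.trans g.zero.symm)
    omega
  · exact h

theorem GoodFun.valley {l : ℕ} {W : ℕ → ℕ} (g : GoodFun l W) (i j : ℕ) (hij : i < j)
    (hj : 2 * j + 2 < 2 * l) : W (2 * i + 2) < W (2 * j + 2) := by
  by_contra h
  have h1 : W (2 * i + 2) ≠ W (2 * j + 2) := fun h => by
    have := g.inj _ _ (by omega) (by omega) h
    omega
  exact g.av (2 * i + 1) (2 * i + 2) (2 * j + 2) (by omega) (by omega) hj (by omega)
    (g.down i (by omega))

theorem GoodFun.peak {l : ℕ} {W : ℕ → ℕ} (g : GoodFun l W) (i j : ℕ) (hij : i < j)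
    (hj : 2 * j + 2 < 2 * l) : W (2 * i + 1) < W (2 * j + 1) := by
  by_contra h
  have h1 : W (2 * i + 1) ≠ W (2 * j + 1) := fun h => by
    have := g.inj _ _ (by omega) (by omega) h
    omega
  exact g.av (2 * i + 1) (2 * j + 1) (2 * j + 2) (by omega) (by omega) hj (g.down j hj)
    (by omega)

theorem GoodFun.last {l : ℕ} {W : ℕ → ℕ} (g : GoodFun l W) (i : ℕ)
    (hi : 2 * i + 2 < 2 * l) : W (2 * i + 2) < W (2 * l - 1) := by
  have h := g.up (l - 1) (by omega)
  rw [show 2 * (l - 1) + 1 = 2 * l - 1 by omega] at h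
  by_cases hi' : i + 2 = l
  · rwa [show 2 * (l - 1) = 2 * i + 2 by omega] at h
  · have h2 := g.valley i (l - 2) (by omega) (by omega)
    rw [show 2 * (l - 2) + 2 = 2 * (l - 1) by omega] at h2
    omega

theorem rows_good (l : ℕ) (hl : 2 ≤ l) (W : ℕ → ℕ) (g : GoodFun l W) :
    StrictMono (rowA l W) ∧ StrictMono (rowB l W) ∧ (∀ i, rowA l W i < rowB l W i) ∧
    (∀ i j, rowA l W i ≠ rowB l W j) ∧ (∀ i, rowB l W i < 2 * l) := by
  refine ⟨?_, ?_, ?_, ?_, ?_⟩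
  · intro i j hij
    have hij' : (i : ℕ) < j := hij
    have := j.2
    have p1 := g.pos (2 * i + 2) (by omega) (by omega)
    unfold rowA
    rw [if_pos (by omega)]
    split_ifs with h
    · have := g.valley i j hij (by omega)
      omega
    · have := g.last i (by omega)
      omega
  · intro i j hij
    have hij' : (i : ℕ) < j := hij
    have := j.2
    have p1 := g.pos (2 * i + 1) (by omega) (by omega)
    unfold rowB
    rw [if_pos (by omega)]
    split_ifs with h
    · have := g.peak i j hij (by omega)
      omega
    · have := g.lt (2 * i + 1) (by omega)
      omega
  · intro i
    unfold rowA rowB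
    split_ifs with h
    · have p1 := g.pos (2 * i + 2) (by omega) (by omega)
      have := g.down i (by omega)
      omega
    · have := g.lt (2 * l - 1) (by omega)
      omega
  · intro i j heq
    have := i.2
    have := j.2
    unfold rowA rowB at heq
    split_ifs at heq with h1 h2 h2
    · have p1 := g.pos (2 * i + 2) (by omega) (by omega)
      have p2 := g.pos (2 * j + 1) (by omega) (by omega)
      have := g.inj (2 * i + 2) (2 * j + 1) (by omega) (by omega) (by omega)
      omega
    · have := g.lt (2 * i + 2) (by omega)
      omega
    · have p1 := g.pos (2 * l - 1) (by omega) (by omega)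
      have p2 := g.pos (2 * j + 1) (by omega) (by omega)
      have := g.inj (2 * l - 1) (2 * j + 1) (by omega) (by omega) (by omega)
      omega
    · have := g.lt (2 * l - 1) (by omega)
      omega
  · intro i
    unfold rowB
    split_ifs with h1
    · have := g.lt (2 * i + 1) (by omega)
      omega
    · omega

theorem rows_inj (l : ℕ) (hl : 2 ≤ l) (W W' : ℕ → ℕ) (g : GoodFun l W) (g' : GoodFun l W')
    (hA : rowA l W = rowA l W') (hB : rowB l W = rowB l W') :
    ∀ n, n < 2 * l → W n = W' n := by
  intro n hn
  rcases Nat.eq_zero_or_pos n with rfl | hpos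
  · rw [g.zero, g'.zero]
  have p := g.pos n hpos hn
  have p' := g'.pos n hpos hn
  by_cases hlast : n = 2 * l - 1
  · have := congrFun hA ⟨l - 1, by omega⟩
    simp only [rowA] at this
    rw [if_neg (by omega), if_neg (by omega), ← hlast] at this
    omega
  rcases Nat.even_or_odd' n with ⟨m, hm | hm⟩
  · have := congrFun hA ⟨m - 1, by omega⟩
    simp only [rowA] at this
    rw [if_pos (by omega), if_pos (by omega), show 2 * (m - 1) + 2 = n by omega] at this
    omega
  · have := congrFun hB ⟨m, by omega⟩
    simp only [rowB] at this
    rw [if_pos (by omega), if_pos (by omega), ← hm] at this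
    omega

/-- Reconstructing the word from the rows. -/
def unrow (l : ℕ) (a b : ℕ → ℕ) (n : ℕ) : ℕ :=
  if n = 0 then 0 else if n = 2 * l - 1 then a (l - 1) + 1
  else if n % 2 = 0 then a (n / 2 - 1) + 1 else b (n / 2) + 1

theorem unrow_even (l : ℕ) (a b : ℕ → ℕ) (i : ℕ) (hi : 2 * i + 2 < 2 * l) :
    unrow l a b (2 * i + 2) = a i + 1 := by
  unfold unrow
  rw [if_neg (by omega), if_neg (by omega), if_pos (by omega),
    show (2 * i + 2) / 2 - 1 = i by omega]

theorem unrow_odd (l : ℕ) (a b : ℕ → ℕ) (i : ℕ) (hi : 2 * i + 2 < 2 * l) :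
    unrow l a b (2 * i + 1) = b i + 1 := by
  unfold unrow
  rw [if_neg (by omega), if_neg (by omega), if_neg (by omega),
    show (2 * i + 1) / 2 = i by omega]

theorem unrow_last (l : ℕ) (hl : 2 ≤ l) (a b : ℕ → ℕ) :
    unrow l a b (2 * l - 1) = a (l - 1) + 1 := by
  unfold unrow
  rw [if_neg (by omega), if_pos rfl]

theorem unrow_zero (l : ℕ) (a b : ℕ → ℕ) : unrow l a b 0 = 0 := by
  simp [unrow]

theorem pos_cases (l n : ℕ) (hl : 2 ≤ l) (hn : n < 2 * l) :
    n = 0 ∨ n = 2 * l - 1 ∨ (∃ i, 2 * i + 2 < 2 * l ∧ n = 2 * i + 2) ∨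
      ∃ i, 2 * i + 2 < 2 * l ∧ n = 2 * i + 1 := by
  by_cases h0 : n = 0
  · exact Or.inl h0
  by_cases h1 : n = 2 * l - 1
  · exact Or.inr (Or.inl h1)
  rcases Nat.even_or_odd' n with ⟨m, hm | hm⟩
  · exact Or.inr (Or.inr (Or.inl ⟨m - 1, by omega, by omega⟩))
  · exact Or.inr (Or.inr (Or.inr ⟨m, by omega, by omega⟩))

theorem unrow_good (l : ℕ) (hl : 2 ≤ l) (a b : ℕ → ℕ)
    (ha : ∀ i j, i < j → j < l → a i < a j) (hb : ∀ i j, i < j → j < l → b i < b j)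
    (hab : ∀ i, i < l → a i < b i) (hne : ∀ i j, i < l → j < l → a i ≠ b j)
    (hlt : ∀ i, i < l → b i < 2 * l) : GoodFun l (unrow l a b) := by
  have hlast := unrow_last l hl a b
  have hev := unrow_even l a b
  have hod := unrow_odd l a b
  have hz := unrow_zero l a b
  have hbl := hlt (l - 1) (by omega)
  have hal := hab (l - 1) (by omega)
  have ai : ∀ i j, i < l → j < l → a i = a j → i = j := by
    intro i j hi hj h
    rcases lt_trichotomy i j with h' | h' | h'
    · have := ha i j h' hj; omega
    · exact h'
    · have := ha j i h' hi; omega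
  have bi : ∀ i j, i < l → j < l → b i = b j → i = j := by
    intro i j hi hj h
    rcases lt_trichotomy i j with h' | h' | h'
    · have := hb i j h' hj; omega
    · exact h'
    · have := hb j i h' hi; omega
  refine ⟨?_, ?_, ?_, ?_, ?_, hz⟩
  · intro n hn
    rcases pos_cases l n hl hn with rfl | rfl | ⟨i, hi, rfl⟩ | ⟨i, hi, rfl⟩
    · omega
    · omega
    · rw [hev i hi]
      have := ha i (l - 1) (by omega) (by omega)
      omega
    · rw [hod i hi]
      have := hb i (l - 1) (by omega) (by omega)
      omega
  · intro n m hn hm h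
    rcases pos_cases l n hl hn with rfl | rfl | ⟨i, hi, rfl⟩ | ⟨i, hi, rfl⟩ <;>
    rcases pos_cases l m hl hm with rfl | rfl | ⟨j, hj, rfl⟩ | ⟨j, hj, rfl⟩ <;>
    try rw [hev i hi] at h
    all_goals try rw [hod i hi] at h
    all_goals try rw [hev j hj] at h
    all_goals try rw [hod j hj] at h
    all_goals try rw [hlast] at h
    all_goals try rw [hz] at h
    all_goals first
      | omega
      | (have := ai _ _ (by omega) (by omega) (Nat.succ_injective h); omega)
      | (have := bi _ _ (by omega) (by omega) (Nat.succ_injective h); omega)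
      | (exact absurd (Nat.succ_injective h) (hne _ _ (by omega) (by omega)))
      | (exact absurd (Nat.succ_injective h).symm (hne _ _ (by omega) (by omega)))
  · intro i hi
    rcases Nat.eq_zero_or_pos i with rfl | hpos
    · rw [Nat.mul_zero, hz, hod 0 (by omega)]; omega
    obtain ⟨k, rfl⟩ : ∃ k, i = k + 1 := ⟨i - 1, by omega⟩
    rw [Nat.mul_add, Nat.mul_one, hev k (by omega)]
    by_cases h : k + 2 = l
    · rw [show 2 * k + 2 + 1 = 2 * l - 1 by omega, hlast]
      have := ha k (l - 1) (by omega) (by omega)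
      omega
    · have e := hod (k + 1) (by omega)
      rw [Nat.mul_add, Nat.mul_one] at e
      rw [e]
      have := hab k (by omega)
      have := hb k (k + 1) (by omega) (by omega)
      omega
  · intro i hi
    rw [hev i hi, hod i hi]
    have := hab i (by omega)
    omega
  · intro x y z hxy hyz hz' h1 h2
    have ha' : ∀ i j, i ≤ j → j < l → a i ≤ a j := by
      intro i j hij hj
      rcases hij.lt_or_eq with h | rfl
      · exact (ha i j h hj).le
      · exact le_rfl
    have hb' : ∀ i j, i ≤ j → j < l → b i ≤ b j := by
      intro i j hij hj
      rcases hij.lt_or_eq with h | rfl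
      · exact (hb i j h hj).le
      · exact le_rfl
    -- the middle entry is at an odd position
    rcases pos_cases l y hl (by omega) with rfl | rfl | ⟨j, hj, rfl⟩ | ⟨j, hj, rfl⟩
    · omega
    · omega
    · rw [hev j hj] at h1 h2
      rcases pos_cases l z hl (by omega) with rfl | rfl | ⟨k, hk, rfl⟩ | ⟨k, hk, rfl⟩
      · omega
      · have := ha' j (l - 1) (by omega) (by omega)
        omega
      · rw [hev k hk] at h1
        have := ha' j k (by omega) (by omega)
        omega
      · rw [hod k hk] at h1
        have := ha' j k (by omega) (by omega)
        have := hab k (by omega)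
        omega
    · rw [hod j hj] at h1 h2
      rcases pos_cases l x hl (by omega) with rfl | rfl | ⟨k, hk, rfl⟩ | ⟨k, hk, rfl⟩
      · omega
      · omega
      · rw [hev k hk] at h2
        have := hab k (by omega)
        have := hb' k j (by omega) (by omega)
        omega
      · rw [hod k hk] at h2
        have := hb' k j (by omega) (by omega)
        omega

def permToSYT (l : ℕ) (hl : 2 ≤ l) (h0 : 0 < 2 * l) (w : {w : Equiv.Perm (Fin (2 * l)) // UpDown w ∧
    occ321 w = ∅ ∧ w ⟨0, h0⟩ = ⟨0, h0⟩}) : SYT2 l :=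
  ⟨(rowA l (natFun w.1), rowB l (natFun w.1)), rows_good l hl _ ((good_iff l h0 w.1).1 w.2)⟩

theorem permToSYT_bij (l : ℕ) (hl : 2 ≤ l) (h0 : 0 < 2 * l) : Function.Bijective (permToSYT l hl h0) := by
  constructor
  · rintro ⟨w, hw⟩ ⟨w', hw'⟩ h
    have h1 : rowA l (natFun w) = rowA l (natFun w') := congrArg (fun t => t.1.1) h
    have h2 : rowB l (natFun w) = rowB l (natFun w') := congrArg (fun t => t.1.2) h
    have h3 := rows_inj l hl _ _ ((good_iff l h0 w).1 hw) ((good_iff l h0 w').1 hw') h1 h2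
    apply Subtype.ext
    apply Equiv.ext
    intro i
    apply Fin.ext
    have := h3 i i.2
    simpa [natFun] using this
  · rintro ⟨⟨a, b⟩, ha, hb, hab, hne, hlt⟩
    dsimp only at ha hb hab hne hlt
    have hblast : b ⟨l - 1, by omega⟩ = 2 * l - 1 := by
      rcases syt_cover a b ha hb hab hne hlt (2 * l - 1) (by omega) with ⟨i, hi⟩ | ⟨i, hi⟩
      · have := hab i
        have := hlt i
        omega
      · have h1 : b i ≤ b ⟨l - 1, by omega⟩ := hb.monotone (by
          rw [Fin.le_def]; have := i.2; simp only; omega)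
        have := hlt ⟨l - 1, by omega⟩
        omega
    let a' : ℕ → ℕ := fun i => if h : i < l then a ⟨i, h⟩ else 0
    let b' : ℕ → ℕ := fun i => if h : i < l then b ⟨i, h⟩ else 0
    have ea : ∀ i (h : i < l), a' i = a ⟨i, h⟩ := fun i h => by simp [a', h]
    have eb : ∀ i (h : i < l), b' i = b ⟨i, h⟩ := fun i h => by simp [b', h]
    have g : GoodFun l (unrow l a' b') := by
      apply unrow_good l hl
      · intro i j hij hj
        rw [ea i (by omega), ea j hj]; exact ha hij
      · intro i j hij hj
        rw [eb i (by omega), eb j hj]; exact hb hij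
      · intro i hi
        rw [ea i hi, eb i hi]; exact hab _
      · intro i j hi hj
        rw [ea i hi, eb j hj]; exact hne _ _
      · intro i hi
        rw [eb i hi]; exact hlt _
    let f : Fin (2 * l) → Fin (2 * l) := fun i => ⟨unrow l a' b' i, g.lt i i.2⟩
    have hf : Function.Injective f := by
      intro i j h
      exact Fin.ext (g.inj i j i.2 j.2 (congrArg Fin.val h))
    let w : Equiv.Perm (Fin (2 * l)) :=
      Equiv.ofBijective f (Finite.injective_iff_bijective.1 hf)
    have ew : ∀ n, n < 2 * l → natFun w n = unrow l a' b' n := by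
      intro n hn
      simp [natFun, hn, w, f]
    have gw : GoodFun l (natFun w) := by
      refine ⟨?_, ?_, ?_, ?_, ?_, ?_⟩
      · intro i hi; rw [ew i hi]; exact g.lt i hi
      · intro i j hi hj h; rw [ew i hi, ew j hj] at h; exact g.inj i j hi hj h
      · intro i hi; rw [ew _ hi, ew _ (by omega)]; exact g.up i hi
      · intro i hi; rw [ew _ hi, ew _ (by omega)]; exact g.down i hi
      · intro i j k h1 h2 h3 h4 h5
        rw [ew k h3, ew j (by omega)] at h4
        rw [ew i (by omega), ew j (by omega)] at h5
        exact g.av i j k h1 h2 h3 h4 h5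
      · rw [ew 0 h0]; exact g.zero
    refine ⟨⟨w, (good_iff l h0 w).2 gw⟩, ?_⟩
    apply Subtype.ext
    change (rowA l (natFun w), rowB l (natFun w)) = (a, b)
    have hi' : ∀ i : Fin l, ¬ ((i : ℕ) + 1 < l) → i = ⟨l - 1, by omega⟩ := by
      intro i h
      apply Fin.ext
      have := i.2
      simp only
      omega
    congr 1
    · funext i
      unfold rowA
      split_ifs with h
      · rw [ew _ (by omega), unrow_even l a' b' i (by omega), ea i i.2]; rfl
      · rw [ew _ (by omega), unrow_last l hl, ea (l - 1) (by omega)]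
        exact congrArg a (hi' i h).symm
    · funext i
      unfold rowB
      split_ifs with h
      · rw [ew _ (by omega), unrow_odd l a' b' i (by omega), eb i i.2]; rfl
      · rw [hi' i h, hblast]

theorem stmt9 (l : ℕ) (hl : 2 ≤ l) :
    Nat.card {w : Equiv.Perm (Fin (2 * l)) // UpDown w ∧ occ321 w = ∅ ∧
        w ⟨0, by omega⟩ = ⟨0, by omega⟩} = catalan l := by
  rw [Nat.card_congr (Equiv.ofBijective _ (permToSYT_bij l hl (by omega))), card_SYT2]
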